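/- Let k ≥ 3 be odd and let C_k be the undirected cycle on the vertex set Z_k, whose edge relation consists of all pairs (u, v) with v = u + 1 (mod k) or v = u − 1 (mod k). For u, v ∈ Z_k, consider all sequences z_1, z_2, …, z_{k−1} of elements of Z_k with z_1 = u and z_{k−1} = v, and for each such sequence count the number of indices 1 ≤ i ≤ k−2 for which (z_i, z_{i+1}) is an edge of C_k. Then the maximum of this count over all such sequences equals k−2 if u ≠ v, and equals k−3 if u = v. -/

import Mathlib

/-!
A walk of length `n` with all steps `±1` moves by `a - b`, where `a + b = n` count the two kinds
of steps. For `n = k - 2` this displacement is `2 (a + 1)` modulo `k` with `1 ≤ a + 1 ≤ k - 1`;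
as `2` is invertible modulo the odd number `k`, it ranges over exactly the nonzero residues.
Hence all `k - 2` steps can be edges precisely when `u ≠ v`. For `u = v`, stay put once and then
use a closed walk of the even length `k - 3`.
-/

section StepCount

variable {α : Type*} (r : α → α → Prop) [DecidableRel r]

/-- The number of consecutive pairs of the sequence `z 0, …, z n` that are related by `r`. -/
def stepCount {n : ℕ} (z : Fin (n + 1) → α) : ℕ :=
  (Finset.univ.filter fun i : Fin n => r (z i.castSucc) (z i.succ)).card

/-- The values of `stepCount r` over all sequences `z 0, …, z n` from `u` to `v`. -/
def stepCounts (n : ℕ) (u v : α) : Set ℕ :=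
  {c | ∃ z : Fin (n + 1) → α, z 0 = u ∧ z (Fin.last n) = v ∧ c = stepCount r z}

variable {r} {n : ℕ} {u v : α}

theorem stepCount_le (z : Fin (n + 1) → α) : stepCount r z ≤ n :=
  (Finset.card_filter_le _ _).trans_eq (Finset.card_fin n)

theorem stepCount_eq_length_iff {z : Fin (n + 1) → α} :
    stepCount r z = n ↔ ∀ i : Fin n, r (z i.castSucc) (z i.succ) := by
  have h := Finset.card_filter_eq_iff (s := Finset.univ)
    (p := fun i : Fin n => r (z i.castSucc) (z i.succ))
  simpa only [stepCount, Finset.card_fin, Finset.mem_univ, true_imp_iff] using h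

theorem stepCount_cons_of_not_rel {x : α} {z : Fin (n + 1) → α} (hx : ¬ r x (z 0)) :
    stepCount r (Fin.cons x z : Fin (n + 2) → α) = stepCount r z := by
  simp only [stepCount, Fin.card_filter_univ_succ, Fin.castSucc_zero, ← Fin.succ_castSucc,
    Fin.cons_zero, Fin.cons_succ, if_neg hx]

theorem le_of_mem_stepCounts {c : ℕ} (hc : c ∈ stepCounts r n u v) : c ≤ n := by
  obtain ⟨z, -, -, rfl⟩ := hc
  exact stepCount_le z

theorem length_mem_stepCounts_iff :
    n ∈ stepCounts r n u v ↔ ∃ z : Fin (n + 1) → α,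
      z 0 = u ∧ z (Fin.last n) = v ∧ ∀ i : Fin n, r (z i.castSucc) (z i.succ) := by
  simp only [stepCounts, Set.mem_ofPred_eq, eq_comm (a := n), stepCount_eq_length_iff]

theorem mem_stepCounts_succ_of_not_rel_self {c : ℕ} (hu : ¬ r u u)
    (hc : c ∈ stepCounts r n u v) : c ∈ stepCounts r (n + 1) u v := by
  obtain ⟨z, rfl, rfl, rfl⟩ := hc
  exact ⟨Fin.cons (z 0) z, rfl, rfl, (stepCount_cons_of_not_rel hu).symm⟩

end StepCount

section UnitStep

variable {R : Type*} [AddCommGroupWithOne R]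

/-- Adjacency by `±1`. On `ZMod k` this is the edge relation of the undirected cycle `C_k`. -/
def UnitStep (x y : R) : Prop := y = x + 1 ∨ y = x - 1

instance [DecidableEq R] : DecidableRel (UnitStep (R := R)) :=
  fun x y => inferInstanceAs (Decidable (y = x + 1 ∨ y = x - 1))

theorem not_unitStep_self [NeZero (1 : R)] (x : R) : ¬ UnitStep x x := by
  simp [UnitStep, eq_sub_iff_add_eq]

theorem exists_add_sub_of_forall_unitStep {n : ℕ} {z : Fin (n + 1) → R}
    (hz : ∀ i : Fin n, UnitStep (z i.castSucc) (z i.succ)) :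
    ∃ a b : ℕ, a + b = n ∧ z (Fin.last n) = z 0 + a - b := by
  induction n with
  | zero => exact ⟨0, 0, rfl, by simp⟩
  | succ n ih =>
    obtain ⟨a, b, hab, hlast⟩ := ih (z := fun i => z i.castSucc) fun i => hz i.castSucc
    rcases hz (Fin.last n) with hup | hdown
    · refine ⟨a + 1, b, by omega, ?_⟩
      rw [← Fin.succ_last, hup, hlast, Fin.castSucc_zero, Nat.cast_succ]
      abel
    · refine ⟨a, b + 1, by omega, ?_⟩
      rw [← Fin.succ_last, hdown, hlast, Fin.castSucc_zero, Nat.cast_succ]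
      abel

theorem exists_forall_unitStep (u : R) (a b : ℕ) :
    ∃ z : Fin (a + b + 1) → R, z 0 = u ∧ z (Fin.last (a + b)) = u + a - b ∧
      ∀ i : Fin (a + b), UnitStep (z i.castSucc) (z i.succ) := by
  -- First `a` steps up, then `b` steps down; the subtraction `i - a` is truncated.
  refine ⟨fun i => u + (min i.val a : ℕ) - (i.val - a : ℕ), by simp, by simp, fun i => ?_⟩
  simp only [Fin.val_castSucc, Fin.val_succ]
  rcases lt_or_ge i.val a with hi | hi
  · left
    rw [min_eq_left hi.le, min_eq_left hi, Nat.sub_eq_zero_of_le hi.le,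
      Nat.sub_eq_zero_of_le hi, Nat.cast_succ]
    abel
  · right
    rw [min_eq_right hi, min_eq_right (hi.trans i.val.le_succ), Nat.succ_sub hi, Nat.cast_succ]
    abel

theorem length_mem_stepCounts_unitStep_iff [DecidableEq R] {n : ℕ} {u v : R} :
    n ∈ stepCounts UnitStep n u v ↔ ∃ a b : ℕ, a + b = n ∧ v = u + a - b := by
  rw [length_mem_stepCounts_iff]
  constructor
  · rintro ⟨z, rfl, rfl, hz⟩
    exact exists_add_sub_of_forall_unitStep hz
  · rintro ⟨a, b, rfl, rfl⟩
    exact exists_forall_unitStep u a b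

theorem length_mem_stepCounts_unitStep_self [DecidableEq R] {n : ℕ} (hn : Even n) (u : R) :
    n ∈ stepCounts UnitStep n u u := by
  obtain ⟨m, rfl⟩ := hn
  exact length_mem_stepCounts_unitStep_iff.2 ⟨m, m, rfl, (add_sub_cancel_right _ _).symm⟩

end UnitStep

section OddCycle

theorem isUnit_two_zmod_of_odd {k : ℕ} (hk : Odd k) : IsUnit (2 : ZMod k) := by
  exact_mod_cast (ZMod.isUnit_iff_coprime 2 k).2 (Nat.coprime_two_left.2 hk)

theorem zmod_add_sub_eq_add_two_mul {n a b : ℕ} (hab : a + b = n) (u : ZMod (n + 2)) :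
    u + a - b = u + 2 * ((a + 1 : ℕ) : ZMod (n + 2)) := by
  have hmod : ((a + b + 2 : ℕ) : ZMod (n + 2)) = 0 := by rw [hab, ZMod.natCast_self]
  push_cast at hmod ⊢
  linear_combination -hmod

theorem length_mem_stepCounts_zmod_iff {n : ℕ} (hn : Odd n) {u v : ZMod (n + 2)} :
    n ∈ stepCounts UnitStep n u v ↔ u ≠ v := by
  have htwo : IsUnit (2 : ZMod (n + 2)) := isUnit_two_zmod_of_odd (hn.add_even even_two)
  rw [length_mem_stepCounts_unitStep_iff]
  constructor
  · rintro ⟨a, b, hab, hv⟩ rfl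
    rw [zmod_add_sub_eq_add_two_mul hab, left_eq_add, htwo.mul_right_eq_zero,
      ZMod.natCast_eq_zero_iff] at hv
    have hle : n + 2 ≤ a + 1 := Nat.le_of_dvd a.succ_pos hv
    omega
  · intro huv
    obtain ⟨d, hd⟩ := htwo.dvd (a := v - u)
    have hd0 : d.val ≠ 0 := by
      rw [Ne, ZMod.val_eq_zero]
      rintro rfl
      exact huv (sub_eq_zero.1 (hd.trans (mul_zero 2))).symm
    have hdlt : d.val < n + 2 := d.val_lt
    refine ⟨d.val - 1, n + 1 - d.val, by omega, ?_⟩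
    rw [zmod_add_sub_eq_add_two_mul (by omega), Nat.sub_one_add_one hd0, ZMod.natCast_zmod_val,
      ← hd, add_sub_cancel]

theorem isGreatest_stepCounts_zmod_of_ne {n : ℕ} (hn : Odd n) {u v : ZMod (n + 2)}
    (huv : u ≠ v) : IsGreatest (stepCounts UnitStep n u v) n :=
  ⟨(length_mem_stepCounts_zmod_iff hn).2 huv, fun _ => le_of_mem_stepCounts⟩

theorem isGreatest_stepCounts_zmod_self {n : ℕ} (hn : Odd n) (u : ZMod (n + 2)) :
    IsGreatest (stepCounts UnitStep n u u) (n - 1) := by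
  obtain ⟨m, rfl⟩ : ∃ m, n = m + 1 := ⟨n - 1, (Nat.sub_add_cancel hn.pos).symm⟩
  have hm : Even m := Nat.not_odd_iff_even.1 (Nat.odd_add_one.1 hn)
  have : Fact (1 < m + 1 + 2) := ⟨by omega⟩
  constructor
  · exact mem_stepCounts_succ_of_not_rel_self (not_unitStep_self u)
      (length_mem_stepCounts_unitStep_self hm u)
  · intro c hc
    have hne : c ≠ m + 1 := by
      rintro rfl
      exact (length_mem_stepCounts_zmod_iff hn).1 hc rfl
    exact Nat.le_sub_one_of_lt ((le_of_mem_stepCounts hc).lt_of_ne hne)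

end OddCycle

/-- In the undirected cycle `C_k` on `Z_k` (`k ≥ 3` odd, edges `(u, v)` with
`v = u ± 1 (mod k)`), the maximum, over all walks `z_1, …, z_{k-1}` with `z_1 = u`
and `z_{k-1} = v`, of the number of indices `1 ≤ i ≤ k-2` with `(z_i, z_{i+1})`
an edge, equals `k-2` if `u ≠ v` and `k-3` if `u = v`. -/
theorem stmt_11 (k : ℕ) (hk : 3 ≤ k) (hodd : Odd k) (u v : ZMod k) :
    IsGreatest
      {c : ℕ | ∃ z : Fin (k - 1) → ZMod k,
        z ⟨0, by omega⟩ = u ∧ z ⟨k - 2, by omega⟩ = v ∧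
        c = (Finset.univ.filter fun i : Fin (k - 2) =>
              z ⟨i.1 + 1, by have := i.isLt; omega⟩ =
                  z ⟨i.1, by have := i.isLt; omega⟩ + 1 ∨
              z ⟨i.1 + 1, by have := i.isLt; omega⟩ =
                  z ⟨i.1, by have := i.isLt; omega⟩ - 1).card}
      (if u ≠ v then k - 2 else k - 3) := by
  obtain ⟨n, rfl⟩ : ∃ n, k = n + 2 := ⟨k - 2, by omega⟩
  have hn : Odd n := (Nat.odd_add.1 hodd).2 even_two
  split_ifs with huv
  · exact isGreatest_stepCounts_zmod_of_ne hn huv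
  · obtain rfl : u = v := not_not.1 huv
    exact isGreatest_stepCounts_zmod_self hn u
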